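/- arXiv:2405.04703 — 2 statements merged into one kernel-verified Lean document; each statement's English description precedes it below -/
import Mathlib

section
/- In a Bonnet-Myers sharp graph G=(V,E) of diameter 2, every vertex has degree |V|−2 or |V|−1, and every vertex of degree |V|−2 has a unique vertex at distance 2 from it, which also has degree |V|−2. -/
open scoped Classical
open Finset

noncomputable section

/-- The degree of a vertex `x` in the graph `G`. -/
def deg {V : Type*} [Fintype V] (G : SimpleGraph V) (x : V) : ℕ :=
  (Finset.univ.filter (fun y => G.Adj x y)).card

/-- The diameter of `G`: the maximum of the combinatorial distance over all pairs of vertices. -/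
def diam {V : Type*} [Fintype V] (G : SimpleGraph V) : ℕ :=
  Finset.univ.sup (fun xy : V × V => G.dist xy.1 xy.2)

/-- The probability measure `μ_x^p` of the lazy simple random walk at `x` with idleness `p`. -/
def mu {V : Type*} [Fintype V] (G : SimpleGraph V) (p : ℝ) (x : V) : V → ℝ :=
  fun z => if z = x then p else if G.Adj x z then (1 - p) / (deg G x : ℝ) else 0

/-- The Wasserstein distance `W₁(μ₁, μ₂)` with respect to the combinatorial distance of `G`:
the infimum of the total transport cost over all transport plans from `μ₁` to `μ₂`. -/
def W1 {V : Type*} [Fintype V] (G : SimpleGraph V) (μ₁ μ₂ : V → ℝ) : ℝ :=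
  sInf {c : ℝ | ∃ π : V → V → ℝ,
    (∀ x y, 0 ≤ π x y ∧ π x y ≤ 1) ∧
    (∀ x, ∑ y, π x y = μ₁ x) ∧
    (∀ y, ∑ x, π x y = μ₂ y) ∧
    c = ∑ x, ∑ y, (G.dist x y : ℝ) * π x y}

/-- The `p`-Ollivier-Ricci curvature `κ_p(x,y) = 1 - W₁(μ_x^p, μ_y^p)`. -/
def kappa {V : Type*} [Fintype V] (G : SimpleGraph V) (p : ℝ) (x y : V) : ℝ :=
  1 - W1 G (mu G p x) (mu G p y)

/-- The Lin-Lu-Yau curvature `κ_LLY(x,y) = lim_{p→1} κ_p(x,y)/(1-p)`. -/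
def kappaLLY {V : Type*} [Fintype V] (G : SimpleGraph V) (x y : V) : ℝ :=
  Filter.limUnder (nhdsWithin 1 (Set.Iio 1)) (fun p => kappa G p x y / (1 - p))

/-- `G` is Bonnet-Myers sharp if the infimum of `κ_LLY` over the edges equals `2/diam(G)`. -/
def BMSharp {V : Type*} [Fintype V] (G : SimpleGraph V) : Prop :=
  sInf {r : ℝ | ∃ x y, G.Adj x y ∧ r = kappaLLY G x y} = 2 / (diam G : ℝ)

/-- `G` is obtained from the complete graph on its vertex set by deleting a matching
(a set of pairwise disjoint edges, encoded as a symmetric irreflexive relation in which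
every vertex has at most one partner). -/
def IsMatchingDeletionOfComplete {V : Type*} (G : SimpleGraph V) : Prop :=
  ∃ M : V → V → Prop, Symmetric M ∧ (∀ x, ¬ M x x) ∧
    (∀ x y z, M x y → M x z → y = z) ∧
    (∀ x y, G.Adj x y ↔ x ≠ y ∧ ¬ M x y)

/-- The graph `G(a,b)` on `2a+b` vertices `u_1, …, u_{2a}, v_1, …, v_b` (encoded as
`Fin (2a+b)`, with `u_i` the index `i-1` and `v_j` the index `2a+j-1`), in which two distinct
vertices are adjacent unless they form a pair `{u_{2i-1}, u_{2i}}`, i.e. `G(a,b)` is the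
complete graph `K_{2a+b}` with a matching of size `a` deleted. -/
def Gab (a b : ℕ) : SimpleGraph (Fin (2*a+b)) where
  Adj x y := x ≠ y ∧ ¬((x : ℕ) < 2*a ∧ (y : ℕ) < 2*a ∧ (x : ℕ)/2 = (y : ℕ)/2)
  symm := by
    constructor
    intro x y h
    exact ⟨h.1.symm, fun hc => h.2 ⟨hc.2.1, hc.1, hc.2.2.symm⟩⟩
  loopless := by constructor; intro x h; exact h.1 rfl

/-- The antitree `AT(a_1, …, a_N)` on the disjoint union of sets `V_1, …, V_N` with
`|V_k| = a_k` (0-indexed here: `V_k` is `Fin (a k)` for `k : Fin N`): two distinct vertices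
are adjacent iff they lie in the same set or in consecutive sets. -/
def antitree (N : ℕ) (a : Fin N → ℕ) : SimpleGraph (Σ k : Fin N, Fin (a k)) where
  Adj x y := x ≠ y ∧
    ((x.1 : ℕ) = (y.1 : ℕ) ∨ (x.1 : ℕ) + 1 = (y.1 : ℕ) ∨ (y.1 : ℕ) + 1 = (x.1 : ℕ))
  symm := by
    constructor
    intro x y h
    refine ⟨h.1.symm, ?_⟩
    rcases h.2 with h2 | h2 | h2
    · exact Or.inl h2.symm
    · exact Or.inr (Or.inr h2)
    · exact Or.inr (Or.inl h2)
  loopless := by constructor; intro x h; exact h.1 rfl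

/-!
Kantorovich duality bounds the curvature of an edge `x ∼ y` from above by `Δf(x) - Δf(y)` for every
`1`-Lipschitz `f` with `f(y) - f(x) = 1`. For `f = d(x₀, ·)` and curvature at least `K`, adding
these bounds along a geodesic from `x₀` gives the Laplacian comparison
`Δ d(x₀, ·)(z) ≤ 1 - K d(x₀, z)`, and hence `K · diam(G) ≤ 2`, because `Δf ≥ -1` for `1`-Lipschitz
`f`.

For `K = 1` the comparison is an equality at distance two, so all neighbours of a vertex at
distance two from `x₀` are neighbours of `x₀`. At distance one it says that a neighbour of `x₀` has
at most one neighbour at distance two from `x₀`. Together these leave at most one vertex at distance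
two from `x₀`, so every vertex of the complement graph has degree at most one.
-/

section Distance

variable {V : Type*} {G : SimpleGraph V} {f : V → ℝ} {x z : V}

/-- `f` is `1`-Lipschitz for the graph distance: the potentials of Kantorovich duality. -/
def OneLipschitz (G : SimpleGraph V) (f : V → ℝ) : Prop :=
  ∀ a b, f b - f a ≤ G.dist a b

lemma oneLipschitz_dist (hG : G.Connected) (x : V) : OneLipschitz G fun z => (G.dist x z : ℝ) := by
  intro a b
  have htri : (G.dist x b : ℝ) ≤ G.dist x a + G.dist a b := mod_cast hG.dist_triangle
  exact sub_le_iff_le_add'.mpr htri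

lemma OneLipschitz.abs_sub_le_one (hf : OneLipschitz G f) (hxz : G.Adj x z) : |f z - f x| ≤ 1 := by
  have hdist : ∀ {a b}, G.Adj a b → f b - f a ≤ 1 := fun {a b} hab => by
    simpa [SimpleGraph.dist_eq_one_iff_adj.mpr hab] using hf a b
  rw [abs_sub_le_iff]
  exact ⟨hdist hxz, hdist hxz.symm⟩

lemma exists_adj_dist_eq_of_dist_eq_succ {n : ℕ} (h : G.dist x z = n + 1) :
    ∃ y, G.Adj y z ∧ G.dist x y = n := by
  have hr : G.Reachable z x := .of_dist_ne_zero (by rw [SimpleGraph.dist_comm, h]; simp)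
  obtain ⟨walk, hlen⟩ := hr.exists_walk_length_eq_dist
  rw [SimpleGraph.dist_comm, h] at hlen
  cases walk with
  | nil => simp at hlen
  | @cons _ y _ hzy tail =>
    rw [SimpleGraph.Walk.length_cons, Nat.add_right_cancel_iff] at hlen
    refine ⟨y, hzy.symm, le_antisymm ?_ ?_⟩
    · rw [SimpleGraph.dist_comm, ← hlen]
      exact SimpleGraph.dist_le tail
    · have htri := hzy.reachable.symm.dist_triangle_right x
      rw [h, SimpleGraph.dist_eq_one_iff_adj.mpr hzy.symm] at htri
      exact Nat.le_of_add_le_add_right htri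

lemma dist_eq_two_iff_compl_adj (hG : G.Connected) (h : G.dist x z ≤ 2) :
    G.dist x z = 2 ↔ Gᶜ.Adj x z := by
  rw [SimpleGraph.compl_adj, ← SimpleGraph.dist_eq_one_iff_adj, ne_eq, ← hG.dist_eq_zero_iff]
  omega

end Distance

section Transport

/-- Transport plans (couplings) from `μ` to `ν`. The upper bound on the entries, implied by the
marginal conditions for probability vectors, is kept so as to match the definition of `W1`. -/
structure IsCoupling {α β : Type*} [Fintype α] [Fintype β] (μ : α → ℝ) (ν : β → ℝ)
    (π : α → β → ℝ) : Prop where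
  nonneg : ∀ a b, 0 ≤ π a b
  le_one : ∀ a b, π a b ≤ 1
  sum_right : ∀ a, ∑ b, π a b = μ a
  sum_left : ∀ b, ∑ a, π a b = ν b

namespace IsCoupling

variable {α β : Type*} [Fintype α] [Fintype β] {μ μ' : α → ℝ} {ν ν' : β → ℝ} {π π' : α → β → ℝ}

lemma prod (hμ : μ ∈ stdSimplex ℝ α) (hν : ν ∈ stdSimplex ℝ β) :
    IsCoupling μ ν fun a b => μ a * ν b where
  nonneg a b := mul_nonneg (hμ.1 a) (hν.1 b)
  le_one a b :=
    mul_le_one₀ (mem_Icc_of_mem_stdSimplex hμ a).2 (hν.1 b) (mem_Icc_of_mem_stdSimplex hν b).2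
  sum_right a := by rw [← mul_sum, hν.2, mul_one]
  sum_left b := by rw [← sum_mul, hμ.2, one_mul]

lemma convexCombo (hπ : IsCoupling μ ν π) (hπ' : IsCoupling μ' ν' π') {s t : ℝ} (hs : 0 ≤ s)
    (ht : 0 ≤ t) (hst : s + t = 1) :
    IsCoupling (s • μ + t • μ') (s • ν + t • ν') (s • π + t • π') where
  nonneg a b := add_nonneg (mul_nonneg hs (hπ.nonneg a b)) (mul_nonneg ht (hπ'.nonneg a b))
  le_one a b := convex_Iic (1 : ℝ) (hπ.le_one a b) (hπ'.le_one a b) hs ht hst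
  sum_right a := by simp [sum_add_distrib, ← mul_sum, hπ.sum_right, hπ'.sum_right]
  sum_left b := by simp [sum_add_distrib, ← mul_sum, hπ.sum_left, hπ'.sum_left]

lemma sum_mul_sub_sum_mul (hπ : IsCoupling μ ν π) (f : α → ℝ) (g : β → ℝ) :
    ∑ b, ν b * g b - ∑ a, μ a * f a = ∑ a, ∑ b, (g b - f a) * π a b := by
  have hν : ∑ b, ν b * g b = ∑ a, ∑ b, g b * π a b := by
    rw [sum_comm]
    simp_rw [← hπ.sum_left, sum_mul, mul_comm]
  have hμ : ∑ a, μ a * f a = ∑ a, ∑ b, f a * π a b := by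
    simp_rw [← hπ.sum_right, sum_mul, mul_comm]
  simp_rw [hν, hμ, sub_mul, sum_sub_distrib]

end IsCoupling

variable {V : Type*} [Fintype V] {G : SimpleGraph V} {μ ν : V → ℝ} {π : V → V → ℝ} {f : V → ℝ}

/-- The total cost of the transport plan `π` for the graph distance. -/
def transportCost (G : SimpleGraph V) (π : V → V → ℝ) : ℝ :=
  ∑ x, ∑ y, (G.dist x y : ℝ) * π x y

lemma transportCost_nonneg (hπ : ∀ a b, 0 ≤ π a b) : 0 ≤ transportCost G π :=
  sum_nonneg fun a _ => sum_nonneg fun b _ => mul_nonneg (Nat.cast_nonneg _) (hπ a b)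

lemma transportCost_combo (s t : ℝ) (π π' : V → V → ℝ) :
    transportCost G (s • π + t • π') = s * transportCost G π + t * transportCost G π' := by
  simp [transportCost, mul_add, sum_add_distrib, mul_sum, mul_left_comm]

lemma W1_eq_sInf_image (G : SimpleGraph V) (μ ν : V → ℝ) :
    W1 G μ ν = sInf (transportCost G '' {π | IsCoupling μ ν π}) := by
  refine congrArg sInf (Set.ext fun c => ⟨?_, ?_⟩)
  · rintro ⟨π, hπ, hright, hleft, rfl⟩
    exact ⟨π, ⟨fun a b => (hπ a b).1, fun a b => (hπ a b).2, hright, hleft⟩, rfl⟩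
  · rintro ⟨π, hπ, rfl⟩
    exact ⟨π, fun a b => ⟨hπ.nonneg a b, hπ.le_one a b⟩, hπ.sum_right, hπ.sum_left, rfl⟩

lemma W1_le_transportCost (hπ : IsCoupling μ ν π) : W1 G μ ν ≤ transportCost G π := by
  rw [W1_eq_sInf_image]
  refine csInf_le ⟨0, ?_⟩ ⟨π, hπ, rfl⟩
  rintro _ ⟨π', hπ', rfl⟩
  exact transportCost_nonneg hπ'.nonneg

lemma exists_transportCost_lt (hμ : μ ∈ stdSimplex ℝ V) (hν : ν ∈ stdSimplex ℝ V) {c : ℝ}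
    (hc : W1 G μ ν < c) : ∃ π, IsCoupling μ ν π ∧ transportCost G π < c := by
  rw [W1_eq_sInf_image] at hc
  have hne : {π | IsCoupling μ ν π}.Nonempty := ⟨_, IsCoupling.prod hμ hν⟩
  obtain ⟨_, ⟨π, hπ, rfl⟩, hlt⟩ := exists_lt_of_csInf_lt (hne.image _) hc
  exact ⟨π, hπ, hlt⟩

lemma convexOn_W1 (G : SimpleGraph V) :
    ConvexOn ℝ (stdSimplex ℝ V ×ˢ stdSimplex ℝ V) fun m : (V → ℝ) × (V → ℝ) => W1 G m.1 m.2 := by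
  refine ⟨(convex_stdSimplex ℝ V).prod (convex_stdSimplex ℝ V), ?_⟩
  rintro ⟨μ, ν⟩ ⟨hμ, hν⟩ ⟨μ', ν'⟩ ⟨hμ', hν'⟩ s t hs ht hst
  refine le_of_forall_pos_le_add fun ε hε => ?_
  obtain ⟨π, hπ, hlt⟩ := exists_transportCost_lt hμ hν (lt_add_of_pos_right (W1 G μ ν) hε)
  obtain ⟨π', hπ', hlt'⟩ := exists_transportCost_lt hμ' hν' (lt_add_of_pos_right (W1 G μ' ν') hε)
  calc W1 G (s • μ + t • μ') (s • ν + t • ν')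
      ≤ transportCost G (s • π + t • π') :=
        W1_le_transportCost (hπ.convexCombo hπ' hs ht hst)
    _ = s * transportCost G π + t * transportCost G π' := transportCost_combo s t π π'
    _ ≤ s * (W1 G μ ν + ε) + t * (W1 G μ' ν' + ε) := by gcongr
    _ = s * W1 G μ ν + t * W1 G μ' ν' + ε := by linear_combination ε * hst

lemma OneLipschitz.sum_mul_sub_le_W1 (hf : OneLipschitz G f) (hμ : μ ∈ stdSimplex ℝ V)
    (hν : ν ∈ stdSimplex ℝ V) : ∑ z, ν z * f z - ∑ z, μ z * f z ≤ W1 G μ ν := by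
  refine le_of_forall_gt fun c hc => ?_
  obtain ⟨π, hπ, hlt⟩ := exists_transportCost_lt hμ hν hc
  rw [hπ.sum_mul_sub_sum_mul]
  refine lt_of_le_of_lt (sum_le_sum fun a _ => sum_le_sum fun b _ => ?_) hlt
  exact mul_le_mul_of_nonneg_right (hf a b) (hπ.nonneg a b)

lemma W1_single (hG : G.Connected) (x y : V) :
    W1 G (Pi.single x 1) (Pi.single y 1) = G.dist x y := by
  have hx := single_mem_stdSimplex ℝ x
  have hy := single_mem_stdSimplex ℝ y
  refine le_antisymm ?_ ?_
  · simpa [transportCost, Pi.single_apply] using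
      W1_le_transportCost (G := G) (IsCoupling.prod hx hy)
  · simpa [Pi.single_apply] using (oneLipschitz_dist hG x).sum_mul_sub_le_W1 hx hy

end Transport

section Laplacian

variable {V : Type*} [Fintype V] {G : SimpleGraph V} {f : V → ℝ} {z w : V}

/-- The normalised graph Laplacian `Δf(x) = (1/d_x) ∑_{z ∼ x} (f(z) - f(x))`, with value `0` at an
isolated vertex. -/
def laplacian (G : SimpleGraph V) (f : V → ℝ) (x : V) : ℝ :=
  (∑ z ∈ G.neighborFinset x, (f z - f x)) / G.degree x

lemma degree_mul_laplacian_sub (G : SimpleGraph V) (f : V → ℝ) (x : V) (c : ℝ) :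
    G.degree x * (laplacian G f x - c) = ∑ z ∈ G.neighborFinset x, (f z - f x - c) := by
  rw [sum_sub_distrib, sum_const, SimpleGraph.card_neighborFinset_eq_degree, nsmul_eq_mul, mul_sub,
    laplacian, mul_div_cancel_of_imp']
  intro h
  rw [Nat.cast_eq_zero, ← SimpleGraph.card_neighborFinset_eq_degree, card_eq_zero] at h
  rw [h, sum_empty]

namespace OneLipschitz

lemma abs_laplacian_le_one (hf : OneLipschitz G f) (x : V) : |laplacian G f x| ≤ 1 := by
  rw [laplacian, abs_div, Nat.abs_cast]
  refine div_le_one_of_le₀ ?_ (Nat.cast_nonneg _)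
  calc |∑ z ∈ G.neighborFinset x, (f z - f x)|
      ≤ ∑ z ∈ G.neighborFinset x, |f z - f x| := abs_sum_le_sum_abs _ _
    _ ≤ #(G.neighborFinset x) • (1 : ℝ) :=
        sum_le_card_nsmul _ _ _ fun z hz =>
          hf.abs_sub_le_one ((G.mem_neighborFinset x z).mp hz)
    _ = G.degree x := by rw [nsmul_one, SimpleGraph.card_neighborFinset_eq_degree]

lemma eq_sub_one_of_laplacian_le (hf : OneLipschitz G f) (hz : laplacian G f z ≤ -1)
    (hzw : G.Adj z w) : f w = f z - 1 := by
  have hterm : ∀ v ∈ G.neighborFinset z, 0 ≤ f v - f z - -1 := fun v hv => by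
    linarith [(abs_le.mp (hf.abs_sub_le_one ((G.mem_neighborFinset z v).mp hv))).1]
  have hsum : ∑ v ∈ G.neighborFinset z, (f v - f z - -1) = 0 := by
    refine le_antisymm ?_ (sum_nonneg hterm)
    rw [← degree_mul_laplacian_sub]
    exact mul_nonpos_of_nonneg_of_nonpos (Nat.cast_nonneg _) (sub_nonpos.mpr hz)
  have hw := (sum_eq_zero_iff_of_nonneg hterm).mp hsum w ((G.mem_neighborFinset z w).mpr hzw)
  linarith

end OneLipschitz

end Laplacian

section Curvature

variable {V : Type*} [Fintype V] {G : SimpleGraph V} {p K : ℝ} {f : V → ℝ} {x y : V}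

lemma deg_eq_degree (G : SimpleGraph V) (x : V) : deg G x = G.degree x := by
  rw [deg, ← SimpleGraph.neighborFinset_eq_filter, SimpleGraph.card_neighborFinset_eq_degree]

lemma deg_add_compl_degree_add_one (G : SimpleGraph V) (x : V) :
    deg G x + Gᶜ.degree x + 1 = Fintype.card V := by
  have hlt := G.degree_lt_card_verts x
  rw [deg_eq_degree, SimpleGraph.degree_compl]
  omega

lemma mu_eq_single_add (G : SimpleGraph V) (p : ℝ) (x z : V) :
    mu G p x z =
      (Pi.single x p : V → ℝ) z +
        if z ∈ G.neighborFinset x then (1 - p) / (G.degree x : ℝ) else 0 := by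
  rw [mu, deg_eq_degree, Pi.single_apply]
  by_cases hzx : z = x <;> simp [hzx]

lemma sum_mu_mul (hx : 0 < G.degree x) (p : ℝ) (f : V → ℝ) :
    ∑ z, mu G p x z * f z = f x + (1 - p) * laplacian G f x := by
  have hmean : ∑ z ∈ G.neighborFinset x, f z = G.degree x * (laplacian G f x + f x) := by
    simpa using (degree_mul_laplacian_sub G f x (-f x)).symm
  simp only [mu_eq_single_add, add_mul, sum_add_distrib, ite_mul, zero_mul, sum_ite_mem,
    univ_inter, ← mul_sum, hmean, Pi.single_apply, sum_ite_eq', mem_univ, if_true]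
  field_simp
  ring

lemma mu_mem_stdSimplex (hx : 0 < G.degree x) (hp : p ∈ Set.Icc (0 : ℝ) 1) :
    mu G p x ∈ stdSimplex ℝ V := by
  have hp₀ := hp.1
  have hp₁ := sub_nonneg.mpr hp.2
  refine ⟨fun z => ?_, ?_⟩
  · rw [mu]
    split_ifs <;> positivity
  · simpa [laplacian] using sum_mu_mul hx p fun _ => 1

lemma mu_one (G : SimpleGraph V) (x : V) : mu G 1 x = Pi.single x 1 := by
  ext z
  simp [mu_eq_single_add]

lemma mu_combo (G : SimpleGraph V) (x : V) (p q : ℝ) {s t : ℝ} (hst : s + t = 1) :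
    mu G (s * p + t * q) x = s • mu G p x + t • mu G q x := by
  ext z
  obtain rfl := eq_sub_of_add_eq hst
  simp only [mu_eq_single_add, Pi.add_apply, Pi.smul_apply, smul_eq_mul, Pi.single_apply]
  split_ifs <;> ring

lemma convexOn_W1_mu (hx : 0 < G.degree x) (hy : 0 < G.degree y) :
    ConvexOn ℝ (Set.Icc 0 1) fun p => W1 G (mu G p x) (mu G p y) := by
  refine ⟨convex_Icc 0 1, fun p hp q hq s t hs ht hst => ?_⟩
  simp only [smul_eq_mul, mu_combo G _ p q hst]
  exact (convexOn_W1 G).2 (x := (mu G p x, mu G p y)) (y := (mu G q x, mu G q y))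
    ⟨mu_mem_stdSimplex hx hp, mu_mem_stdSimplex hy hp⟩
    ⟨mu_mem_stdSimplex hx hq, mu_mem_stdSimplex hy hq⟩ hs ht hst

lemma slope_W1_mu_one (hG : G.Connected) (hxy : G.Adj x y) (p : ℝ) :
    slope (fun p => W1 G (mu G p x) (mu G p y)) 1 p = kappa G p x y / (1 - p) := by
  rw [slope_def_field, mu_one, mu_one, W1_single hG, SimpleGraph.dist_eq_one_iff_adj.mpr hxy,
    Nat.cast_one, kappa, ← neg_div_neg_eq, neg_sub, neg_sub]

lemma monotoneOn_kappa_div (hG : G.Connected) (hxy : G.Adj x y) :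
    MonotoneOn (fun p => kappa G p x y / (1 - p)) (Set.Ioo 0 1) := by
  have hmono := (convexOn_W1_mu hxy.degree_pos_left hxy.degree_pos_right).monotoneOn_slope_lt
    (Set.right_mem_Icc.mpr zero_le_one)
  simp only [funext (slope_W1_mu_one hG hxy)] at hmono
  exact hmono.mono fun p hp => ⟨Set.Ioo_subset_Icc_self hp, hp.2⟩

lemma kappa_div_le_laplacian_sub (hxy : G.Adj x y) (hf : OneLipschitz G f) (hfxy : f y - f x = 1)
    (hp : p ∈ Set.Ioo (0 : ℝ) 1) :
    kappa G p x y / (1 - p) ≤ laplacian G f x - laplacian G f y := by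
  have hp' := Set.Ioo_subset_Icc_self hp
  have hW := hf.sum_mul_sub_le_W1 (mu_mem_stdSimplex hxy.degree_pos_left hp')
    (mu_mem_stdSimplex hxy.degree_pos_right hp')
  rw [sum_mu_mul hxy.degree_pos_left, sum_mu_mul hxy.degree_pos_right] at hW
  rw [div_le_iff₀ (sub_pos.mpr hp.2), kappa]
  linarith

lemma kappaLLY_le_laplacian_sub (hG : G.Connected) (hxy : G.Adj x y) (hf : OneLipschitz G f)
    (hfxy : f y - f x = 1) : kappaLLY G x y ≤ laplacian G f x - laplacian G f y := by
  -- `limUnder` is only meaningful once the limit exists: the quotient is monotone and bounded.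
  have hle : ∀ c ∈ (fun p => kappa G p x y / (1 - p)) '' Set.Ioo 0 1,
      c ≤ laplacian G f x - laplacian G f y := by
    rintro _ ⟨p, hp, rfl⟩
    exact kappa_div_le_laplacian_sub hxy hf hfxy hp
  have hne : (Set.Ioo (0 : ℝ) 1).Nonempty := Set.nonempty_Ioo.mpr one_pos
  have hlim := (monotoneOn_kappa_div hG hxy).tendsto_nhdsWithin_Ioo_left hne ⟨_, hle⟩
  rw [kappaLLY, hlim.limUnder_eq]
  exact csSup_le (hne.image _) hle

lemma laplacian_dist_le (hG : G.Connected) (hK : ∀ ⦃a b⦄, G.Adj a b → K ≤ kappaLLY G a b)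
    (x z : V) : laplacian G (fun v => (G.dist x v : ℝ)) z ≤ 1 - K * G.dist x z := by
  have hLip := oneLipschitz_dist hG x
  induction hn : G.dist x z generalizing z with
  | zero => simpa using (abs_le.mp (hLip.abs_laplacian_le_one z)).2
  | succ n ih =>
    obtain ⟨y, hyz, hy⟩ := exists_adj_dist_eq_of_dist_eq_succ hn
    have hcurv := (hK hyz).trans (kappaLLY_le_laplacian_sub hG hyz hLip (by simp [hn, hy]))
    push_cast
    linarith [ih y hy]

lemma mul_dist_le_two (hG : G.Connected) (hK : ∀ ⦃a b⦄, G.Adj a b → K ≤ kappaLLY G a b)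
    (x z : V) : K * G.dist x z ≤ 2 := by
  have hlower := (abs_le.mp ((oneLipschitz_dist hG x).abs_laplacian_le_one z)).1
  linarith [laplacian_dist_le hG hK x z]

lemma BMSharp.two_div_diam_le_kappaLLY (hBM : BMSharp G) (hxy : G.Adj x y) :
    2 / (diam G : ℝ) ≤ kappaLLY G x y := by
  rw [← hBM]
  refine csInf_le (Set.Finite.bddBelow ?_) ⟨x, y, hxy, rfl⟩
  refine (Set.finite_range fun e : V × V => kappaLLY G e.1 e.2).subset ?_
  rintro _ ⟨a, b, -, rfl⟩
  exact ⟨(a, b), rfl⟩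

lemma nontrivial_of_diam_ne_zero (h : diam G ≠ 0) : Nontrivial V := by
  by_contra hV
  have := not_nontrivial_iff_subsingleton.mp hV
  refine h (Nat.le_zero.mp (Finset.sup_le fun e _ => ?_))
  rw [Subsingleton.elim e.1 e.2, SimpleGraph.dist_self]

end Curvature

section CurvatureAtLeastOne

variable {V : Type*} [Fintype V] {G : SimpleGraph V} {x y z w : V}

lemma eq_of_common_adj_of_dist_eq_two (hG : G.Connected)
    (hκ : ∀ ⦃a b⦄, G.Adj a b → 1 ≤ kappaLLY G a b) (hxy : G.Adj x y) (hyz : G.Adj y z)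
    (hyw : G.Adj y w) (hxz : G.dist x z = 2) (hxw : G.dist x w = 2) : z = w := by
  have hdist : G.dist x y = 1 := SimpleGraph.dist_eq_one_iff_adj.mpr hxy
  have hle : ∑ v ∈ G.neighborFinset y, ((G.dist x v : ℝ) - 1) ≤ 0 := by
    have hΔ := laplacian_dist_le hG hκ x y
    have hsum := degree_mul_laplacian_sub G (fun v => (G.dist x v : ℝ)) y 0
    simp only [hdist, sub_zero, Nat.cast_one, mul_one, sub_self] at hΔ hsum
    rw [← hsum]
    exact mul_nonpos_of_nonneg_of_nonpos (Nat.cast_nonneg _) hΔ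
  by_contra hzw
  have hx : x ∉ ({z, w} : Finset V) := by
    rw [mem_insert, mem_singleton]
    rintro (rfl | rfl) <;> simp at hxz hxw
  have hsub : {x, z, w} ⊆ G.neighborFinset y := by
    simp [insert_subset_iff, hxy.symm, hyz, hyw]
  have hge : ∑ v ∈ {x, z, w}, ((G.dist x v : ℝ) - 1) ≤
      ∑ v ∈ G.neighborFinset y, ((G.dist x v : ℝ) - 1) := by
    refine sum_le_sum_of_subset_of_nonneg hsub fun v _ hv => sub_nonneg.mpr ?_
    have hxv : x ≠ v := fun h => hv (h ▸ mem_insert_self _ _)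
    exact_mod_cast hG.pos_dist_of_ne hxv
  have hsum : ∑ v ∈ {x, z, w}, ((G.dist x v : ℝ) - 1) = 1 := by
    rw [sum_insert hx, sum_pair hzw, SimpleGraph.dist_self, hxz, hxw]
    norm_num
  linarith

lemma adj_of_adj_of_dist_eq_two (hG : G.Connected)
    (hκ : ∀ ⦃a b⦄, G.Adj a b → 1 ≤ kappaLLY G a b) (hxz : G.dist x z = 2) (hzw : G.Adj z w) :
    G.Adj x w := by
  have hΔ : laplacian G (fun v => (G.dist x v : ℝ)) z ≤ -1 := by
    refine (laplacian_dist_le hG hκ x z).trans_eq ?_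
    rw [hxz]
    norm_num
  have hw := (oneLipschitz_dist hG x).eq_sub_one_of_laplacian_le hΔ hzw
  rw [hxz] at hw
  have hdist : (G.dist x w : ℝ) = 1 := hw.trans (by norm_num)
  exact SimpleGraph.dist_eq_one_iff_adj.mp (mod_cast hdist)

lemma eq_of_dist_eq_two (hG : G.Connected) (hκ : ∀ ⦃a b⦄, G.Adj a b → 1 ≤ kappaLLY G a b)
    (hxz : G.dist x z = 2) (hxw : G.dist x w = 2) : z = w := by
  obtain ⟨y, hyz, hdist⟩ := exists_adj_dist_eq_of_dist_eq_succ hxz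
  have hxy : G.Adj x y := SimpleGraph.dist_eq_one_iff_adj.mp hdist
  have hwy := adj_of_adj_of_dist_eq_two hG hκ (SimpleGraph.dist_comm.trans hxw) hxy
  exact eq_of_common_adj_of_dist_eq_two hG hκ hxy hyz hwy.symm hxz hxw

lemma dist_eq_two_iff_compl_adj_of_one_le_kappaLLY (hG : G.Connected)
    (hκ : ∀ ⦃a b⦄, G.Adj a b → 1 ≤ kappaLLY G a b) : G.dist x z = 2 ↔ Gᶜ.Adj x z :=
  dist_eq_two_iff_compl_adj hG (by simpa using mul_dist_le_two hG hκ x z)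

lemma compl_degree_le_one (hG : G.Connected) (hκ : ∀ ⦃a b⦄, G.Adj a b → 1 ≤ kappaLLY G a b)
    (x : V) : Gᶜ.degree x ≤ 1 := by
  refine card_le_one.mpr fun z hz w hw => ?_
  rw [SimpleGraph.mem_neighborFinset, ← dist_eq_two_iff_compl_adj_of_one_le_kappaLLY hG hκ] at hz hw
  exact eq_of_dist_eq_two hG hκ hz hw

end CurvatureAtLeastOne

theorem stmt10_general {V : Type*} [Fintype V] [Nontrivial V] (G : SimpleGraph V)
    (hG : G.Connected) (hκ : ∀ ⦃x y⦄, G.Adj x y → 1 ≤ kappaLLY G x y) :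
    (∀ x : V, deg G x = Fintype.card V - 2 ∨ deg G x = Fintype.card V - 1) ∧
    (∀ x : V, deg G x = Fintype.card V - 2 →
      (∃! z : V, G.dist x z = 2) ∧
      (∀ z : V, G.dist x z = 2 → deg G z = Fintype.card V - 2)) := by
  have hdist : ∀ x z, G.dist x z = 2 ↔ Gᶜ.Adj x z := fun _ _ =>
    dist_eq_two_iff_compl_adj_of_one_le_kappaLLY hG hκ
  have hle := compl_degree_le_one hG hκ
  have hdeg := deg_add_compl_degree_add_one G
  have hcard : 1 < Fintype.card V := Fintype.one_lt_card
  refine ⟨fun x => ?_, fun x hx => ⟨?_, fun z hz => ?_⟩⟩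
  · have := hle x
    have := hdeg x
    omega
  · simp only [hdist, ← SimpleGraph.degree_eq_one_iff_existsUnique_adj]
    have := hdeg x
    omega
  · have hpos : 0 < Gᶜ.degree z := ((hdist x z).mp hz).degree_pos_right
    have := hle z
    have := hdeg z
    omega

/-- In a Bonnet-Myers sharp graph of diameter 2, every vertex has degree
`|V| - 2` or `|V| - 1`, and every vertex of degree `|V| - 2` has a unique vertex at distance 2
from it, which also has degree `|V| - 2`. -/
theorem stmt10 {V : Type*} [Fintype V] (G : SimpleGraph V) (hconn : G.Connected)
    (hdiam : diam G = 2) (hBM : BMSharp G) :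
    (∀ x : V, deg G x = Fintype.card V - 2 ∨ deg G x = Fintype.card V - 1) ∧
    (∀ x : V, deg G x = Fintype.card V - 2 →
      (∃! z : V, G.dist x z = 2) ∧
      (∀ z : V, G.dist x z = 2 → deg G z = Fintype.card V - 2)) := by
  have := nontrivial_of_diam_ne_zero (G := G) (by omega)
  exact stmt10_general G hconn fun x y hxy => by
    simpa [hdiam] using hBM.two_div_diam_le_kappaLLY hxy
end
end

section
/- There are infinitely many pairwise non-isomorphic symmetrical antitrees of diameter 4 that are Bonnet-Myers sharp, and infinitely many pairwise non-isomorphic symmetrical antitrees of diameter 6 that are Bonnet-Myers sharp: for every positive integer b, the antitrees AT(1,b,b+2,b,1) and AT(1,b,2b+3,3b+1,2b+3,b,1) are Bonnet-Myers sharp. -/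
open scoped Classical
open Finset

noncomputable section

/-!
Let `f` be the index of the layer of a vertex of an antitree of diameter `L`. It is `1`-Lipschitz,
and `d(u, v) = f v - f u` whenever `f u < f v`, so it is an optimal Kantorovich potential as soon as
some transport plan moves mass only upwards. On an edge `x y` with `f y = f x + 1` and
`deg x ≤ deg y` such a plan exists for idleness `p ≥ 1/2`: send the mass missing at `y` from `x`,
and distribute what is left by a product plan from the layers up to that of `y` to the layer above.
Hence `κ_LLY(x, y) = Δf(x) - Δf(y)`; reversing the order of the layers removes the assumption on the
degrees. The two ends of an edge inside a layer have the same closed neighbourhood, so `κ_LLY ≥ 1`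
there.

Sharpness thus follows once `Δf` decreases by `2 / L` from each layer to the next. For the given
sequences `Δf = 1 - 2 i / L` on the `i`-th layer, counted from `0`.
-/

section TransportPlans

variable {V : Type*} [Fintype V]

/-- The transport plans `π` from `μ` to `ν` over which `W1` takes its infimum. The bound `π ≤ 1`
imposed there is left out: it is automatic when `μ` has total mass `1`. -/
structure IsTransportPlan (μ ν : V → ℝ) (π : V → V → ℝ) : Prop where
  nonneg : ∀ u v, 0 ≤ π u v
  sum_row : ∀ u, ∑ v, π u v = μ u
  sum_col : ∀ v, ∑ u, π u v = ν v

namespace IsTransportPlan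

variable {μ ν μ' ν' : V → ℝ} {π π' : V → V → ℝ}

theorem add (h : IsTransportPlan μ ν π) (h' : IsTransportPlan μ' ν' π') :
    IsTransportPlan (μ + μ') (ν + ν') (π + π') where
  nonneg u v := add_nonneg (h.nonneg u v) (h'.nonneg u v)
  sum_row u := by simp [sum_add_distrib, h.sum_row, h'.sum_row]
  sum_col v := by simp [sum_add_distrib, h.sum_col, h'.sum_col]

theorem diagonal (hμ : ∀ u, 0 ≤ μ u) : IsTransportPlan μ μ (fun u => Pi.single u (μ u)) where
  nonneg u v := (Pi.single_nonneg.mpr (hμ u) : (0 : V → ℝ) ≤ _) v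
  sum_row u := by simp
  sum_col v := by simp [Pi.single_apply]

theorem single (x y : V) {t : ℝ} (ht : 0 ≤ t) :
    IsTransportPlan (Pi.single x t) (Pi.single y t) (Pi.single x (Pi.single y t)) where
  nonneg u v := (Pi.single_nonneg.mpr (Pi.single_nonneg.mpr ht) : (0 : V → V → ℝ) ≤ _) u v
  sum_row u := by obtain rfl | h := eq_or_ne u x <;> simp [*]
  sum_col v := by simp [Pi.single_apply, ite_apply]

theorem product (hμ : ∀ u, 0 ≤ μ u) (hν : ∀ v, 0 ≤ ν v) (h : ∑ w, μ w = ∑ w, ν w) :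
    IsTransportPlan μ ν (fun u v => μ u * ν v / ∑ w, μ w) := by
  refine ⟨fun u v => div_nonneg (mul_nonneg (hμ u) (hν v)) (sum_nonneg fun w _ => hμ w), ?_, ?_⟩
  · intro u
    rw [← sum_div, ← mul_sum, ← h, mul_div_assoc]
    rcases eq_or_ne (∑ w, μ w) 0 with h0 | h0
    · simp [h0, (sum_eq_zero_iff_of_nonneg fun w _ => hμ w).mp h0 u]
    · rw [div_self h0, mul_one]
  · intro v
    rw [← sum_div, ← sum_mul, mul_div_right_comm]
    rcases eq_or_ne (∑ w, μ w) 0 with h0 | h0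
    · simp [(sum_eq_zero_iff_of_nonneg fun w _ => hν w).mp (h ▸ h0) v]
    · rw [div_self h0, one_mul]

theorem sum_sub_mul (h : IsTransportPlan μ ν π) (f : V → ℝ) :
    ∑ u, ∑ v, (f v - f u) * π u v = ∑ v, f v * (ν v - μ v) := by
  simp only [sub_mul, mul_sub, sum_sub_distrib]
  rw [sum_comm]
  simp only [← mul_sum, h.sum_row, h.sum_col]

theorem le_one (h : IsTransportPlan μ ν π) (hμ : ∑ u, μ u = 1) (u v : V) : π u v ≤ 1 :=
  calc π u v ≤ ∑ w, π u w := single_le_sum (fun w _ => h.nonneg u w) (mem_univ v)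
    _ ≤ ∑ z, ∑ w, π z w :=
        single_le_sum (fun z _ => sum_nonneg fun w _ => h.nonneg z w) (mem_univ u)
    _ = 1 := by simp only [h.sum_row, hμ]

variable {α : Type*} [LinearOrder α] {f : V → α}

/-- The common part `μ ⊓ ν` stays in place. The excess of `μ` lies in `{f ≤ c}` and that of `ν` in
`{c < f}`, so the rest may be moved by a product plan. -/
theorem exists_of_threshold (c : α) (hμ : ∀ u, 0 ≤ μ u) (hν : ∀ v, 0 ≤ ν v)
    (hmass : ∑ w, μ w = ∑ w, ν w)
    (hup : ∀ u, c < f u → μ u ≤ ν u) (hdown : ∀ v, f v ≤ c → ν v ≤ μ v) :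
    ∃ π, IsTransportPlan μ ν π ∧ ∀ u v, π u v ≠ 0 → u = v ∨ (f u ≤ c ∧ c < f v) := by
  obtain ⟨e, he⟩ : ∃ e : V → ℝ, e = μ - μ ⊓ ν := ⟨_, rfl⟩
  obtain ⟨d, hd⟩ : ∃ d : V → ℝ, d = ν - μ ⊓ ν := ⟨_, rfl⟩
  have he_zero (u : V) (hu : c < f u) : e u = 0 := by simp [he, hup u hu]
  have hd_zero (v : V) (hv : f v ≤ c) : d v = 0 := by simp [hd, hdown v hv]
  have hed : ∑ w, e w = ∑ w, d w := by simp [he, hd, hmass]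
  have hplan := (diagonal (μ := μ ⊓ ν) fun u => le_inf (hμ u) (hν u)).add
    (product (fun u => by simp [he]) (fun v => by simp [hd]) hed)
  rw [he, hd, add_sub_cancel, add_sub_cancel, ← he, ← hd] at hplan
  refine ⟨_, hplan, fun u v huv => ?_⟩
  by_contra! hne
  obtain ⟨huv_ne, hlevel⟩ := hne
  have hprod : e u * d v = 0 := by
    rcases le_or_gt (f u) c with hu | hu
    · rw [hd_zero v (hlevel hu), mul_zero]
    · rw [he_zero u hu, zero_mul]
  exact huv (by simp [Pi.single_eq_of_ne huv_ne.symm, hprod])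

/-- The mass `(ν y - μ y)⁺` is sent from `x` to `y`, after which `exists_of_threshold` applies. -/
theorem exists_of_threshold_of_pair {x y : V} (hμ : ∀ u, 0 ≤ μ u) (hν : ∀ v, 0 ≤ ν v)
    (hmass : ∑ w, μ w = ∑ w, ν w) (hup : ∀ u, f y < f u → μ u ≤ ν u)
    (hdown : ∀ v, v ≠ y → f v ≤ f y → ν v ≤ μ v) (hxy : ν y - μ y ≤ μ x - ν x) :
    ∃ π, IsTransportPlan μ ν π ∧
      ∀ u v, π u v ≠ 0 → u = v ∨ (u = x ∧ v = y) ∨ (f u ≤ f y ∧ f y < f v) := by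
  set t : ℝ := max (ν y - μ y) 0
  have ht_nonneg : 0 ≤ t := le_max_right _ _
  obtain ⟨μ', hμ'⟩ : ∃ μ' : V → ℝ, μ' = μ - Pi.single x t := ⟨_, rfl⟩
  obtain ⟨ν', hν'⟩ : ∃ ν' : V → ℝ, ν' = ν - Pi.single y t := ⟨_, rfl⟩
  have hμ'_apply (u : V) : μ' u = μ u - if u = x then t else 0 := by simp [hμ', Pi.single_apply]
  have hν'_apply (v : V) : ν' v = ν v - if v = y then t else 0 := by simp [hν', Pi.single_apply]
  have hμ'_nonneg (u : V) : 0 ≤ μ' u := by grind [hμ u, hν u]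
  have hν'_nonneg (v : V) : 0 ≤ ν' v := by grind [hμ v, hν v]
  have hmass' : ∑ w, μ' w = ∑ w, ν' w := by simp [hμ', hν', hmass]
  have hup' (u : V) (hu : f y < f u) : μ' u ≤ ν' u := by grind
  have hdown' (v : V) (hv : f v ≤ f y) : ν' v ≤ μ' v := by grind
  obtain ⟨π, hπ, hsupp⟩ := exists_of_threshold (f y) hμ'_nonneg hν'_nonneg hmass' hup' hdown'
  refine ⟨π + Pi.single x (Pi.single y t), ?_, fun u v huv => ?_⟩
  · convert hπ.add (single x y ht_nonneg) using 1 <;> simp [hμ', hν']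
  · by_contra! hne
    obtain ⟨huv_ne, hxy_ne, hlevel⟩ := hne
    have hπ_zero : π u v = 0 := by
      by_contra h
      grind
    apply huv
    rcases eq_or_ne u x with rfl | hux
    · simp [hπ_zero, hxy_ne rfl]
    · simp [hπ_zero, hux]

end IsTransportPlan

variable {G : SimpleGraph V} {μ ν : V → ℝ}

theorem W1_comm (G : SimpleGraph V) (μ ν : V → ℝ) : W1 G μ ν = W1 G ν μ := by
  unfold W1
  congr 1
  ext c
  constructor
  all_goals
    rintro ⟨π, hπ, hrow, hcol, rfl⟩
    refine ⟨fun u v => π v u, fun u v => hπ v u, hcol, hrow, ?_⟩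
    rw [sum_comm]
    simp only [G.dist_comm]

/-- Kantorovich duality in the direction that certifies optimality: the plan `π` and the
`1`-Lipschitz potential `f` satisfy complementary slackness. -/
theorem W1_eq_of_isTransportPlan {π : V → V → ℝ} {f : V → ℝ} (hπ : IsTransportPlan μ ν π)
    (hμ : ∑ u, μ u = 1) (hf : ∀ u v, f v - f u ≤ G.dist u v)
    (htight : ∀ u v, π u v ≠ 0 → (G.dist u v : ℝ) = f v - f u) :
    W1 G μ ν = ∑ v, f v * (ν v - μ v) := by
  refine IsLeast.csInf_eq ⟨⟨π, fun u v => ⟨hπ.nonneg u v, hπ.le_one hμ u v⟩, hπ.sum_row,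
    hπ.sum_col, ?_⟩, ?_⟩
  · rw [← hπ.sum_sub_mul f]
    refine sum_congr rfl fun u _ => sum_congr rfl fun v _ => ?_
    rcases eq_or_ne (π u v) 0 with h | h
    · rw [h, mul_zero, mul_zero]
    · rw [htight u v h]
  · rintro c ⟨ρ, hρ, hrow, hcol, rfl⟩
    have hρ_plan : IsTransportPlan μ ν ρ := ⟨fun u v => (hρ u v).1, hrow, hcol⟩
    rw [← hρ_plan.sum_sub_mul f]
    gcongr with u _ v _
    · exact (hρ u v).1
    · exact hf u v

theorem W1_eq_of_threshold {f : V → ℝ} {x y : V} (hμ : ∀ u, 0 ≤ μ u) (hν : ∀ v, 0 ≤ ν v)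
    (hμ_mass : ∑ w, μ w = 1) (hν_mass : ∑ w, ν w = 1) (hf : ∀ u v, f v - f u ≤ G.dist u v)
    (hdist_xy : (G.dist x y : ℝ) = f y - f x)
    (hdist : ∀ u v, f u ≤ f y → f y < f v → (G.dist u v : ℝ) = f v - f u)
    (hup : ∀ u, f y < f u → μ u ≤ ν u) (hdown : ∀ v, v ≠ y → f v ≤ f y → ν v ≤ μ v)
    (hxy : ν y - μ y ≤ μ x - ν x) :
    W1 G μ ν = ∑ v, f v * (ν v - μ v) := by
  obtain ⟨π, hπ, hsupp⟩ :=
    IsTransportPlan.exists_of_threshold_of_pair hμ hν (hμ_mass.trans hν_mass.symm) hup hdown hxy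
  refine W1_eq_of_isTransportPlan hπ hμ_mass hf fun u v huv => ?_
  rcases hsupp u v huv with rfl | ⟨rfl, rfl⟩ | ⟨hu, hv⟩
  · simp
  · exact hdist_xy
  · exact hdist u v hu hv

end TransportPlans

section RandomWalk

variable {V : Type*} [Fintype V] {G : SimpleGraph V} {p : ℝ} {x y : V}

/-- The normalized graph Laplacian `Δg(x)`: the mean over the neighbours `z` of `x` of the
increment `g z - g x`. It is the derivative of `∫ g dμ_x^p` with respect to `1 - p`. -/
def graphLaplacian (G : SimpleGraph V) (g : V → ℝ) (x : V) : ℝ :=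
  (∑ z with G.Adj x z, (g z - g x)) / deg G x

theorem graphLaplacian_neg (G : SimpleGraph V) (g : V → ℝ) (x : V) :
    graphLaplacian G (-g) x = -graphLaplacian G g x := by
  simp only [graphLaplacian, Pi.neg_apply, ← neg_sub', sum_neg_distrib, neg_div]

theorem deg_pos_of_adj (hxy : G.Adj x y) : 0 < deg G x :=
  card_pos.mpr ⟨y, by simpa using hxy⟩

theorem mu_self (G : SimpleGraph V) (p : ℝ) (x : V) : mu G p x x = p := if_pos rfl

theorem mu_of_adj (p : ℝ) (hxy : G.Adj x y) : mu G p x y = (1 - p) / deg G x := by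
  simp [mu, hxy, hxy.ne']

theorem mu_of_not_adj (p : ℝ) (hne : y ≠ x) (hxy : ¬G.Adj x y) : mu G p x y = 0 := by
  simp [mu, hne, hxy]

theorem mu_nonneg (hp₀ : 0 ≤ p) (hp₁ : p ≤ 1) (x y : V) : 0 ≤ mu G p x y := by
  have := sub_nonneg.mpr hp₁
  unfold mu
  split_ifs <;> positivity

theorem sum_mul_mu (p : ℝ) (hx : 0 < deg G x) (g : V → ℝ) :
    ∑ z, g z * mu G p x z = g x + (1 - p) * graphLaplacian G g x := by
  have hdeg : (deg G x : ℝ) ≠ 0 := by exact_mod_cast hx.ne'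
  have hmu (z : V) : g z * mu G p x z =
      (if z = x then p * g z else 0) + if G.Adj x z then g z * ((1 - p) / deg G x) else 0 := by
    rcases eq_or_ne z x with rfl | hzx
    · simp [mu_self, mul_comm]
    · simp [mu, hzx]
  have hcard : ∑ z with G.Adj x z, g x = deg G x * g x := by simp [deg]
  simp only [hmu, sum_add_distrib, sum_ite_eq', mem_univ, if_true, ← sum_filter, ← sum_mul,
    graphLaplacian, sum_sub_distrib, hcard]
  field_simp
  ring

theorem sum_mu (p : ℝ) (hx : 0 < deg G x) : ∑ z, mu G p x z = 1 := by
  simpa [graphLaplacian] using sum_mul_mu p hx 1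

theorem kappaLLY_comm (G : SimpleGraph V) (x y : V) : kappaLLY G x y = kappaLLY G y x := by
  simp only [kappaLLY, kappa, W1_comm G (mu G _ x)]

/-- The hypothesis `hW` makes `W₁` affine in `p` near `p = 1`, where its value is `1`. -/
theorem kappaLLY_eq_graphLaplacian_sub {g : V → ℝ} (hxy : G.Adj x y) (hg : g y = g x + 1)
    (hW : ∀ᶠ p in nhdsWithin 1 (Set.Iio 1),
      W1 G (mu G p x) (mu G p y) = ∑ v, g v * (mu G p y v - mu G p x v)) :
    kappaLLY G x y = graphLaplacian G g x - graphLaplacian G g y := by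
  refine Filter.Tendsto.limUnder_eq (tendsto_const_nhds.congr' ?_)
  filter_upwards [hW, self_mem_nhdsWithin] with p hp hp₁
  have hp₁ : 1 - p ≠ 0 := (sub_pos.mpr hp₁).ne'
  rw [kappa, hp]
  simp only [mul_sub, sum_sub_distrib, sum_mul_mu p (deg_pos_of_adj hxy),
    sum_mul_mu p (deg_pos_of_adj hxy.symm), hg]
  field_simp
  ring

/-- The degree condition makes `x` lose at least as much mass as `y` needs; sending that mass along
the edge `x y` leaves only transports from `{g ≤ g y}` to `{g y < g}`. -/
theorem kappaLLY_eq_of_threshold {g : V → ℝ} (hxy : G.Adj x y) (hg : g y = g x + 1)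
    (hlip : ∀ u v, g v - g u ≤ G.dist u v)
    (hdist : ∀ u v, g u ≤ g y → g y < g v → (G.dist u v : ℝ) = g v - g u)
    (hup : ∀ u, g y < g u → ¬G.Adj x u)
    (hdown : ∀ v, v ≠ x → g v ≤ g y → G.Adj y v → G.Adj x v) (hdeg : deg G x ≤ deg G y) :
    kappaLLY G x y = graphLaplacian G g x - graphLaplacian G g y := by
  have hx := deg_pos_of_adj hxy
  have hy := deg_pos_of_adj hxy.symm
  refine kappaLLY_eq_graphLaplacian_sub hxy hg ?_
  filter_upwards [Ioo_mem_nhdsLT (show (1 / 2 : ℝ) < 1 by norm_num)] with p ⟨hp, hp₁⟩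
  have hp₀ : 0 ≤ p := by linarith
  have hp₂ : 0 ≤ 1 - p := by linarith
  have hdist_xy : (G.dist x y : ℝ) = g y - g x := by
    rw [SimpleGraph.dist_eq_one_iff_adj.mpr hxy, hg]
    norm_num
  have hstep : (1 - p) / deg G y ≤ (1 - p) / deg G x := by gcongr
  refine W1_eq_of_threshold (mu_nonneg hp₀ hp₁.le x) (mu_nonneg hp₀ hp₁.le y) (sum_mu p hx)
    (sum_mu p hy) hlip hdist_xy hdist ?_ ?_ ?_
  · intro u hu
    have hux : u ≠ x := by
      rintro rfl
      linarith
    rw [mu_of_not_adj p hux (hup u hu)]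
    exact mu_nonneg hp₀ hp₁.le y u
  · intro v hvy hv
    by_cases hyv : G.Adj y v
    · rw [mu_of_adj p hyv]
      rcases eq_or_ne v x with rfl | hvx
      · rw [mu_self]
        calc (1 - p) / deg G y ≤ 1 - p := div_le_self hp₂ (by exact_mod_cast hy)
          _ ≤ p := by linarith
      · rw [mu_of_adj p (hdown v hvx hv hyv)]
        exact hstep
    · rw [mu_of_not_adj p hvy hyv]
      exact mu_nonneg hp₀ hp₁.le x v
  · rw [mu_self, mu_self, mu_of_adj p hxy, mu_of_adj p hxy.symm]
    linarith

theorem deg_eq_of_twins (hxy : G.Adj x y)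
    (htwin : ∀ z, z ≠ x → z ≠ y → (G.Adj x z ↔ G.Adj y z)) : deg G x = deg G y := by
  have herase : (univ.filter (G.Adj x)).erase y = (univ.filter (G.Adj y)).erase x := by
    ext z
    rcases eq_or_ne z x with rfl | hzx
    · simp
    rcases eq_or_ne z y with rfl | hzy
    · simp
    simp [hzx, hzy, htwin z hzx hzy]
  rw [deg, deg, ← card_erase_add_one (by simpa using hxy), herase,
    card_erase_add_one (by simpa using hxy.symm)]

theorem graphLaplacian_single_self (hx : 0 < deg G x) :
    graphLaplacian G (Pi.single x 1) x = -1 := by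
  have hincr (z : V) (hz : z ∈ univ.filter (G.Adj x)) :
      (Pi.single x 1 : V → ℝ) z - (Pi.single x 1 : V → ℝ) x = -1 := by
    simp [(mem_filter.mp hz).2.ne']
  rw [graphLaplacian, sum_congr rfl hincr, sum_const, nsmul_eq_mul, ← deg]
  field_simp

theorem graphLaplacian_single_of_adj (hxy : G.Adj x y) :
    graphLaplacian G (Pi.single y 1) x = 1 / deg G x := by
  simp [graphLaplacian, hxy.ne, Pi.single_apply, hxy]

theorem kappaLLY_eq_of_twins (hG : G.Preconnected) (hxy : G.Adj x y)
    (htwin : ∀ z, z ≠ x → z ≠ y → (G.Adj x z ↔ G.Adj y z)) :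
    kappaLLY G x y = 1 + 1 / deg G x := by
  have hdeg := deg_eq_of_twins hxy htwin
  obtain ⟨g, hg⟩ : ∃ g : V → ℝ, g = Pi.single y 1 := ⟨_, rfl⟩
  have hg_apply (u : V) : g u = if u = y then 1 else 0 := by simp [hg, Pi.single_apply]
  have hle (u : V) : g u ≤ g y := by grind
  have hlip (u v : V) : g v - g u ≤ G.dist u v := by
    rcases eq_or_ne u v with rfl | huv
    · simp
    · have hdist : (1 : ℝ) ≤ G.dist u v := by exact_mod_cast (hG u v).pos_dist_of_ne huv
      grind
  rw [kappaLLY_eq_of_threshold hxy (by simp [hg_apply, hxy.ne]) hlip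
    (fun u v _ hv => absurd hv (hle v).not_gt) (fun u hu => absurd hu (hle u).not_gt)
    (fun v hvx _ hv => (htwin v hvx hv.ne').mpr hv) hdeg.le, hg,
    graphLaplacian_single_of_adj hxy, graphLaplacian_single_self (deg_pos_of_adj hxy.symm)]
  ring

end RandomWalk

/-- `G` is an antitree with layer function `f`: the layer of `v` has the index `f v`, the indices
that occur form an interval of `ℤ`, and distinct vertices are adjacent exactly when their layers
are equal or consecutive. With values in `ℤ` the notion is invariant under reversal `f ↦ -f`. -/
structure IsLayering {V : Type*} (G : SimpleGraph V) (f : V → ℤ) : Prop where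
  adj_iff : ∀ u v, G.Adj u v ↔ u ≠ v ∧ |f u - f v| ≤ 1
  ordConnected : (Set.range f).OrdConnected

namespace IsLayering

section Distance

variable {V : Type*} {G : SimpleGraph V} {f : V → ℤ} {u v : V}

theorem neg (h : IsLayering G f) : IsLayering G (-f) where
  adj_iff u v := by
    rw [h.adj_iff, Pi.neg_apply, Pi.neg_apply, neg_sub_neg, abs_sub_comm]
  ordConnected := by
    constructor
    rintro _ ⟨u, rfl⟩ _ ⟨v, rfl⟩ k hk
    have hk' : -k ∈ Set.Icc (f v) (f u) := ⟨le_neg.mpr hk.2, neg_le.mpr hk.1⟩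
    obtain ⟨w, hw⟩ := h.ordConnected.out ⟨v, rfl⟩ ⟨u, rfl⟩ hk'
    exact ⟨w, by simp [hw]⟩

theorem exists_eq_add_one (h : IsLayering G f) (huv : f u < f v) : ∃ w, f w = f u + 1 :=
  h.ordConnected.out ⟨u, rfl⟩ ⟨v, rfl⟩ ⟨by lia, by lia⟩

theorem adj_of_eq (h : IsLayering G f) (hne : u ≠ v) (huv : f u = f v) : G.Adj u v :=
  (h.adj_iff u v).mpr ⟨hne, by simp [huv]⟩

theorem adj_of_eq_add_one (h : IsLayering G f) (huv : f v = f u + 1) : G.Adj u v :=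
  (h.adj_iff u v).mpr ⟨by rintro rfl; lia, by simp [huv]⟩

theorem sub_le_length (h : IsLayering G f) (w : G.Walk u v) : f v - f u ≤ w.length := by
  induction w with
  | nil => simp
  | @cons u w v huw p ih =>
    have hstep := (abs_le.mp ((h.adj_iff u w).mp huw).2).1
    rw [SimpleGraph.Walk.length_cons]
    push_cast
    lia

theorem exists_walk_length_le (h : IsLayering G f) {u v : V} (huv : f u < f v) :
    ∃ w : G.Walk u v, w.length ≤ f v - f u := by
  obtain ⟨z, hz⟩ := h.exists_eq_add_one huv
  have huz := h.adj_of_eq_add_one hz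
  rcases (show f z ≤ f v by lia).eq_or_lt with hzv | hzv
  · exact ⟨(h.adj_of_eq_add_one (hzv ▸ hz)).toWalk, by simp [← hzv, hz]⟩
  · obtain ⟨w, hw⟩ := h.exists_walk_length_le hzv
    refine ⟨w.cons huz, ?_⟩
    rw [SimpleGraph.Walk.length_cons]
    push_cast
    lia
termination_by (f v - f u).toNat
decreasing_by lia

theorem preconnected (h : IsLayering G f) : G.Preconnected := by
  intro u v
  wlog huv : f u ≤ f v generalizing u v
  · exact (this v u (not_le.mp huv).le).symm
  rcases huv.eq_or_lt with heq | hlt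
  · rcases eq_or_ne u v with rfl | hne
    · rfl
    · exact (h.adj_of_eq hne heq).reachable
  · obtain ⟨w, -⟩ := h.exists_walk_length_le hlt
    exact w.reachable

theorem sub_le_dist (h : IsLayering G f) (u v : V) : f v - f u ≤ G.dist u v := by
  obtain ⟨w, hw⟩ := (h.preconnected u v).exists_walk_length_eq_dist
  exact hw ▸ h.sub_le_length w

theorem dist_eq (h : IsLayering G f) (huv : f u < f v) : (G.dist u v : ℤ) = f v - f u := by
  refine (h.sub_le_dist u v).antisymm' ?_
  obtain ⟨w, hw⟩ := h.exists_walk_length_le huv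
  exact (Int.ofNat_le.mpr (SimpleGraph.dist_le w)).trans hw

theorem dist_le_one (h : IsLayering G f) (huv : f u = f v) : G.dist u v ≤ 1 := by
  rcases eq_or_ne u v with rfl | hne
  · simp
  · exact (SimpleGraph.dist_eq_one_iff_adj.mpr (h.adj_of_eq hne huv)).le

end Distance

section Curvature

variable {V : Type*} [Fintype V] {G : SimpleGraph V} {f : V → ℤ} {x y : V}

theorem one_le_kappaLLY_of_eq (h : IsLayering G f) (hxy : G.Adj x y) (hf : f x = f y) :
    1 ≤ kappaLLY G x y := by
  rw [kappaLLY_eq_of_twins h.preconnected hxy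
    fun z hzx hzy => by simp [h.adj_iff, hf, hzx.symm, hzy.symm]]
  simp

theorem kappaLLY_eq_of_deg_le (h : IsLayering G f) (hf : f y = f x + 1)
    (hdeg : deg G x ≤ deg G y) :
    kappaLLY G x y =
      graphLaplacian G (fun v => f v) x - graphLaplacian G (fun v => f v) y := by
  refine kappaLLY_eq_of_threshold (h.adj_of_eq_add_one hf) (by exact_mod_cast hf)
    (fun u v => by exact_mod_cast h.sub_le_dist u v) ?_ ?_ ?_ hdeg
  · intro u v hu hv
    norm_cast at hu hv
    exact_mod_cast h.dist_eq (hu.trans_lt hv)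
  · intro u hu hxu
    norm_cast at hu
    have hle := (abs_le.mp ((h.adj_iff x u).mp hxu).2).1
    lia
  · intro v hvx hv hyv
    norm_cast at hv
    have hle := (abs_le.mp ((h.adj_iff y v).mp hyv).2).2
    exact (h.adj_iff x v).mpr ⟨hvx.symm, abs_le.mpr ⟨by lia, by lia⟩⟩

theorem kappaLLY_eq (h : IsLayering G f) (hf : f y = f x + 1) :
    kappaLLY G x y =
      graphLaplacian G (fun v => f v) x - graphLaplacian G (fun v => f v) y := by
  rcases le_total (deg G x) (deg G y) with hdeg | hdeg
  · exact h.kappaLLY_eq_of_deg_le hf hdeg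
  · have hcast : (fun v => ((-f) v : ℝ)) = -fun v => (f v : ℝ) := by
      ext v
      simp
    rw [kappaLLY_comm, h.neg.kappaLLY_eq_of_deg_le (by simp [hf]) hdeg, hcast,
      graphLaplacian_neg, graphLaplacian_neg]
    ring

theorem exists_eq_add_one_of_two_le_diam (h : IsLayering G f) (hG : 2 ≤ diam G) :
    ∃ x y, f y = f x + 1 := by
  obtain ⟨⟨u, v⟩, -, huv : 2 ≤ G.dist u v⟩ := (Finset.le_sup_iff (by norm_num)).mp hG
  wlog hlt : f u < f v generalizing u v
  · refine this v u (by rwa [G.dist_comm]) (lt_of_le_of_ne (not_lt.mp hlt) ?_)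
    intro heq
    have hle := h.dist_le_one heq.symm
    lia
  obtain ⟨w, hw⟩ := h.exists_eq_add_one hlt
  exact ⟨u, w, hw⟩

theorem bmSharp (h : IsLayering G f) (hG : 2 ≤ diam G)
    (hdrop : ∀ x y, f y = f x + 1 → graphLaplacian G (fun v => f v) x -
      graphLaplacian G (fun v => f v) y = 2 / diam G) : BMSharp G := by
  have hradial (x y : V) (hf : f y = f x + 1) : kappaLLY G x y = 2 / diam G :=
    (h.kappaLLY_eq hf).trans (hdrop x y hf)
  refine IsLeast.csInf_eq ⟨?_, ?_⟩
  · obtain ⟨x, y, hf⟩ := h.exists_eq_add_one_of_two_le_diam hG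
    exact ⟨x, y, h.adj_of_eq_add_one hf, (hradial x y hf).symm⟩
  · rintro r ⟨x, y, hxy, rfl⟩
    have hlayers := abs_le.mp ((h.adj_iff x y).mp hxy).2
    obtain hf | hf | hf : f x = f y ∨ f y = f x + 1 ∨ f x = f y + 1 := by lia
    · calc (2 : ℝ) / diam G ≤ 1 := div_le_one_of_le₀ (by exact_mod_cast hG) (by positivity)
        _ ≤ kappaLLY G x y := h.one_le_kappaLLY_of_eq hxy hf
    · exact (hradial x y hf).ge
    · rw [kappaLLY_comm]
      exact (hradial y x hf).ge

end Curvature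

end IsLayering

section Antitree

variable {N M : ℕ} {a : Fin N → ℕ}

/-- The index of the layer containing a vertex of `antitree N a`. -/
def antitreeLayer {N : ℕ} {a : Fin N → ℕ} (z : Σ k : Fin N, Fin (a k)) : ℤ := (z.1 : ℕ)

/-- The indices of the layers that contain neighbours of the `i`-th layer of an antitree with `N`
layers, `i` itself included. -/
def adjacentLayers {N : ℕ} (i : Fin N) : Finset (Fin N) :=
  {k | |((i : ℕ) : ℤ) - (k : ℕ)| ≤ 1}

/-- The Laplacian of the layer index at the vertices of the `i`-th layer of `antitree N a`. The
`- 1` in the denominator excludes the vertex itself, which contributes `0` to the numerator. -/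
def antitreeDrift {N : ℕ} (a : Fin N → ℕ) (i : Fin N) : ℝ :=
  (∑ k ∈ adjacentLayers i, a k * ((k : ℝ) - i)) / (∑ k ∈ adjacentLayers i, (a k : ℝ) - 1)

theorem antitree_adj_iff {u v : Σ k : Fin N, Fin (a k)} :
    (antitree N a).Adj u v ↔ u ≠ v ∧ |antitreeLayer u - antitreeLayer v| ≤ 1 := by
  refine and_congr_right fun _ => ?_
  rw [abs_le, antitreeLayer, antitreeLayer]
  lia

theorem isLayering_antitree (ha : ∀ k, 0 < a k) :
    IsLayering (antitree N a) antitreeLayer where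
  adj_iff _ _ := antitree_adj_iff
  ordConnected := by
    constructor
    rintro _ ⟨u, rfl⟩ _ ⟨v, rfl⟩ k ⟨huk, hkv⟩
    rw [antitreeLayer] at huk hkv
    have hv := v.1.isLt
    lift k to ℕ using by lia
    exact ⟨⟨⟨k, by lia⟩, ⟨0, ha _⟩⟩, rfl⟩

theorem diam_antitree {a : Fin (M + 1) → ℕ} (ha : ∀ k, 0 < a k) (hM : 1 ≤ M) :
    diam (antitree (M + 1) a) = M := by
  have h := isLayering_antitree ha
  apply le_antisymm
  · refine Finset.sup_le fun ⟨u, v⟩ _ => ?_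
    wlog huv : antitreeLayer u ≤ antitreeLayer v generalizing u v
    · simpa [SimpleGraph.dist_comm] using this v u (mem_univ _) (not_le.mp huv).le
    rcases huv.eq_or_lt with heq | hlt
    · exact (h.dist_le_one heq).trans hM
    · have hdist := h.dist_eq hlt
      have hu : 0 ≤ antitreeLayer u := Int.natCast_nonneg _
      have hv : antitreeLayer v ≤ M := Int.ofNat_le.mpr v.1.is_le
      lia
  · obtain ⟨u, hu⟩ : ∃ u : Σ k, Fin (a k), antitreeLayer u = 0 := ⟨⟨0, ⟨0, ha 0⟩⟩, rfl⟩
    obtain ⟨v, hv⟩ : ∃ v : Σ k, Fin (a k), antitreeLayer v = M :=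
      ⟨⟨Fin.last M, ⟨0, ha _⟩⟩, rfl⟩
    have hdist := h.dist_eq (show antitreeLayer u < antitreeLayer v by lia)
    calc M = (antitree (M + 1) a).dist u v := by lia
      _ ≤ diam (antitree (M + 1) a) :=
          le_sup (f := fun xy : _ × _ => (antitree (M + 1) a).dist xy.1 xy.2) (mem_univ (u, v))

theorem sum_antitree_adj (x : Σ k : Fin N, Fin (a k)) (g : Fin N → ℝ) :
    ∑ z with (antitree N a).Adj x z, g z.1 =
      ∑ k ∈ adjacentLayers x.1, a k * g k - g x.1 := by
  have hfilter : univ.filter ((antitree N a).Adj x) =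
      (univ.filter fun z => z.1 ∈ adjacentLayers x.1).erase x := by
    ext z
    simp [adjacentLayers, antitree_adj_iff, antitreeLayer, eq_comm]
  rw [hfilter, sum_erase_eq_sub (by simp [adjacentLayers]), sum_filter, Fintype.sum_sigma]
  simp

theorem deg_antitree (x : Σ k : Fin N, Fin (a k)) :
    (deg (antitree N a) x : ℝ) = ∑ k ∈ adjacentLayers x.1, (a k : ℝ) - 1 := by
  simpa [deg] using sum_antitree_adj x 1

theorem graphLaplacian_antitree (x : Σ k : Fin N, Fin (a k)) :
    graphLaplacian (antitree N a) (fun z => antitreeLayer z) x = antitreeDrift a x.1 := by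
  have hsum := sum_antitree_adj x (fun k => (k : ℝ) - x.1)
  rw [graphLaplacian, antitreeDrift, ← deg_antitree]
  simpa [antitreeLayer] using congrArg (· / (deg (antitree N a) x : ℝ)) hsum

theorem bmSharp_antitree {a : Fin (M + 1) → ℕ} (ha : ∀ k, 0 < a k) (hM : 2 ≤ M) (c : ℝ)
    (hdrift : ∀ i, antitreeDrift a i = c - 2 * i / M) : BMSharp (antitree (M + 1) a) := by
  have hdiam := diam_antitree ha (one_le_two.trans hM)
  refine (isLayering_antitree ha).bmSharp (hM.trans_eq hdiam.symm) fun x y hxy => ?_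
  have hlayer : (y.1 : ℝ) = x.1 + 1 := by
    simp only [antitreeLayer] at hxy
    exact_mod_cast hxy
  rw [graphLaplacian_antitree, graphLaplacian_antitree, hdrift, hdrift, hdiam, hlayer]
  ring

theorem antitreeDrift_five {b : ℕ} (hb : 0 < b) (i : Fin 5) :
    antitreeDrift ![1, b, b + 2, b, 1] i = 1 - 2 * i / 4 := by
  have hb' : (0 : ℝ) < b := by exact_mod_cast hb
  have hvalues : antitreeDrift ![1, b, b + 2, b, 1] =
      (![b / b, (b + 1) / (2 * b + 2), 0, -(b + 1) / (2 * b + 2), -b / b] :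
        Fin 5 → ℝ) := by
    ext i
    fin_cases i <;>
      simp [antitreeDrift, adjacentLayers, sum_filter, Fin.sum_univ_five, abs_le] <;> grind
  rw [hvalues]
  fin_cases i <;> simp <;> grind

theorem antitreeDrift_seven {b : ℕ} (hb : 0 < b) (i : Fin 7) :
    antitreeDrift ![1, b, 2 * b + 3, 3 * b + 1, 2 * b + 3, b, 1] i = 1 - 2 * i / 6 := by
  have hb' : (0 : ℝ) < b := by exact_mod_cast hb
  have hvalues : antitreeDrift ![1, b, 2 * b + 3, 3 * b + 1, 2 * b + 3, b, 1] =
      (![b / b, (2 * b + 2) / (3 * b + 3), (2 * b + 1) / (6 * b + 3), 0,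
        -(2 * b + 1) / (6 * b + 3), -(2 * b + 2) / (3 * b + 3), -b / b] : Fin 7 → ℝ) := by
    ext i
    fin_cases i <;>
      simp [antitreeDrift, adjacentLayers, sum_filter, Fin.sum_univ_seven, abs_le] <;> grind
  rw [hvalues]
  fin_cases i <;> simp <;> grind

theorem bmSharp_antitree_five {b : ℕ} (hb : 0 < b) :
    BMSharp (antitree 5 ![1, b, b + 2, b, 1]) :=
  bmSharp_antitree (by simp [Fin.forall_fin_succ, hb]) (by norm_num) 1
    (by simpa only [Nat.cast_ofNat] using antitreeDrift_five hb)

theorem bmSharp_antitree_seven {b : ℕ} (hb : 0 < b) :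
    BMSharp (antitree 7 ![1, b, 2 * b + 3, 3 * b + 1, 2 * b + 3, b, 1]) :=
  bmSharp_antitree (by simp [Fin.forall_fin_succ, hb]) (by norm_num) 1
    (by simpa only [Nat.cast_ofNat] using antitreeDrift_seven hb)

theorem sum_eq_of_antitree_iso {N' : ℕ} {a' : Fin N' → ℕ}
    (e : antitree N a ≃g antitree N' a') : ∑ k, a k = ∑ k, a' k := by
  simpa using Fintype.card_congr e.toEquiv

end Antitree

/-- For every positive integer `b`, the symmetrical antitrees
`AT(1,b,b+2,b,1)` (diameter 4) and `AT(1,b,2b+3,3b+1,2b+3,b,1)` (diameter 6) are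
Bonnet-Myers sharp, and for distinct values of `b` these antitrees are non-isomorphic;
hence there are infinitely many pairwise non-isomorphic Bonnet-Myers sharp symmetrical
antitrees of diameter 4, and likewise of diameter 6. -/
theorem stmt14 :
    (∀ b : ℕ, 0 < b →
      BMSharp (antitree 5 ![1, b, b+2, b, 1]) ∧
      BMSharp (antitree 7 ![1, b, 2*b+3, 3*b+1, 2*b+3, b, 1])) ∧
    (∀ b b' : ℕ, 0 < b → 0 < b' → b ≠ b' →
      IsEmpty (antitree 5 ![1, b, b+2, b, 1] ≃g antitree 5 ![1, b', b'+2, b', 1]) ∧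
      IsEmpty (antitree 7 ![1, b, 2*b+3, 3*b+1, 2*b+3, b, 1] ≃g
        antitree 7 ![1, b', 2*b'+3, 3*b'+1, 2*b'+3, b', 1])) := by
  refine ⟨fun b hb => ⟨bmSharp_antitree_five hb, bmSharp_antitree_seven hb⟩,
    fun b b' _ _ hne => ⟨⟨fun e => hne ?_⟩, ⟨fun e => hne ?_⟩⟩⟩
  all_goals simpa +arith [Fin.sum_univ_succ] using sum_eq_of_antitree_iso e
end
end
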